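/- Let T be a tournament and let C be a directed cycle in T of length m ≥ 4. Then there exists a directed cycle C′ of length m − 1 with V(C′) ⊆ V(C) such that the unique remaining vertex u ∈ V(C) ∖ V(C′) satisfies d⁺(u, C) ≤ m − 3, where d⁺(u, C) is the number of out-neighbours of u among the vertices of C. -/

import Mathlib

/-!
A vertex `u` of `C` with two in-neighbours on `C` has `d⁺(u, C) ≤ m - 3`. If every vertex of `C` has
two in-neighbours, any cycle of length `m - 1` inside `V(C)` will do, and Moon's theorem provides
one because the tournament on `V(C)` is strongly connected.

Otherwise some `v` has only its predecessor as in-neighbour, so `v` dominates the vertex two places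
ahead of it. If the successor `v⁺` has two in-neighbours, bypass `v⁺`. If not, `v⁺` also dominates
the vertex two places ahead of it, and bypassing `v⁺⁺` works: its in-neighbours include `v` and
`v⁺`.

Moon's theorem is proved by growing a 3-cycle. If no vertex outside a cycle `s` can be inserted
between two consecutive vertices of `s`, then each one is dominated by all of `s` or dominates all
of `s`. Strong connectivity gives an arc `b → a` from the first kind to the second, and one vertex
of `s` can be replaced by `b → a`.
-/

open Set

/-- `T` is a tournament: irreflexive, and for distinct vertices exactly one
of the two possible arcs is present. -/
def IsTournament {V : Type*} (T : V → V → Prop) : Prop :=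
  (∀ x, ¬ T x x) ∧ ∀ x y, x ≠ y → (T x y ↔ ¬ T y x)

/-- `c` is a directed cycle of length `q` in the digraph `T`. -/
def IsCycle {V : Type*} (T : V → V → Prop) (q : ℕ) (c : ZMod q → V) : Prop :=
  Function.Injective c ∧ ∀ i, T (c i) (c (i + 1))

/-- The cycles in the family `C` are pairwise vertex-disjoint. -/
def DisjointCycles {V : Type*} {k q : ℕ} (C : Fin k → ZMod q → V) : Prop :=
  ∀ j j' : Fin k, j ≠ j' → Disjoint (Set.range (C j)) (Set.range (C j'))

/-- `T` contains `k` pairwise vertex-disjoint directed cycles of length `q`. -/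
def HasDisjointCycles {V : Type*} (T : V → V → Prop) (k q : ℕ) : Prop :=
  ∃ C : Fin k → ZMod q → V, (∀ j, IsCycle T q (C j)) ∧ DisjointCycles C

/-- The out-degree of a vertex `v`. -/
noncomputable def outDeg {V : Type*} (T : V → V → Prop) (v : V) : ℕ :=
  {w | T v w}.ncard

/-- `d⁺(v, Y)`: the number of out-neighbours of `v` inside the set `Y`. -/
noncomputable def outDegTo {V : Type*} (T : V → V → Prop) (v : V) (Y : Set V) : ℕ :=
  {w ∈ Y | T v w}.ncard

/-- `d⁺(X, v)`: the number of in-neighbours of `v` inside the set `X`. -/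
noncomputable def inDegFrom {V : Type*} (T : V → V → Prop) (X : Set V) (v : V) : ℕ :=
  {x ∈ X | T x v}.ncard

/-- `d⁺(X, Y)`: the number of arcs from `X` to `Y`. -/
noncomputable def arcs {V : Type*} (T : V → V → Prop) (X Y : Set V) : ℕ :=
  {p : V × V | p.1 ∈ X ∧ p.2 ∈ Y ∧ T p.1 p.2}.ncard

/-- There is an `r`-matching from `X` to `Y`: `r` arcs from `X` to `Y` that
pairwise share no endpoints. -/
def HasMatching {V : Type*} (T : V → V → Prop) (X Y : Set V) (r : ℕ) : Prop :=
  ∃ e : Fin r → V × V,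
    (∀ i, (e i).1 ∈ X ∧ (e i).2 ∈ Y ∧ T (e i).1 (e i).2) ∧
    ∀ i j, i ≠ j → (e i).1 ≠ (e j).1 ∧ (e i).2 ≠ (e j).2

/-- `u` is a Hamiltonian path of the subtournament induced on `S`, written as
`P = (u_{l} … u₂ u₁)`: the vertex `u ⟨0,_⟩` is `u₁`, and each arc goes from the
higher-indexed vertex to the next lower-indexed one. -/
def IsHamPathOn {V : Type*} (T : V → V → Prop) (S : Set V) {l : ℕ}
    (u : Fin l → V) : Prop :=
  Function.Injective u ∧ Set.range u = S ∧
    ∀ (i : ℕ) (h : i + 1 < l), T (u ⟨i + 1, h⟩) (u ⟨i, Nat.lt_of_succ_lt h⟩)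

theorem exists_mem_add_one_notMem {m : ℕ} [NeZero m] {A : Set (ZMod m)}
    (hne : A.Nonempty) (hA : A ≠ univ) : ∃ i ∈ A, i + 1 ∉ A := by
  by_contra! hclosed
  obtain ⟨i, hi⟩ := hne
  have hadd (n : ℕ) : i + n ∈ A := by
    induction n with
    | zero => simpa using hi
    | succ n ih => simpa [add_assoc] using hclosed _ ih
  exact hA (eq_univ_of_forall fun j => by simpa using hadd (j - i).val)

section

variable {V : Type*} {T : V → V → Prop}

theorem setOf_mem_cons_sdiff_singleton {a : V} {l : List V} (h : (a :: l).Nodup) :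
    {v | v ∈ a :: l} \ {a} = {v | v ∈ l} := by
  ext v
  have := h.notMem
  simp only [mem_sdiff, mem_ofPred_eq, List.mem_cons, mem_singleton_iff]
  grind

namespace IsTournament

variable {S : Set V} {v w : V}

theorem asymm (hT : IsTournament T) (h : T v w) : ¬ T w v := by
  rcases eq_or_ne v w with rfl | hvw
  · exact hT.1 v
  · exact (hT.2 v w hvw).1 h

theorem ne_of_arc (hT : IsTournament T) (h : T v w) : v ≠ w :=
  fun hvw => hT.1 w (hvw ▸ h)

theorem outDegTo_add_inDegFrom_add_one (hT : IsTournament T) (hS : S.Finite) (hv : v ∈ S) :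
    outDegTo T v S + inDegFrom T S v + 1 = S.ncard := by
  have hdisj : Disjoint {w ∈ S | T v w} {w ∈ S | T w v} :=
    disjoint_left.2 fun w hout hin => hT.asymm hout.2 hin.2
  have hunion : {w ∈ S | T v w} ∪ {w ∈ S | T w v} = S \ {v} := by
    ext w
    rcases eq_or_ne v w with rfl | hvw
    · simp [hT.1]
    · have := hT.2 v w hvw
      simp only [mem_union, mem_sep_iff, mem_sdiff, mem_singleton_iff, hvw.symm]
      tauto
  rw [outDegTo, inDegFrom, ← ncard_union_eq hdisj (hS.sep _) (hS.sep _), hunion,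
    ncard_sdiff_singleton_add_one hv hS]

theorem outDegTo_le_ncard_sub_three (hT : IsTournament T) (hS : S.Finite) (hv : v ∈ S)
    (hin : 2 ≤ inDegFrom T S v) : outDegTo T v S ≤ S.ncard - 3 := by
  have := hT.outDegTo_add_inDegFrom_add_one hS hv
  omega

end IsTournament

-- `ZMod (n + 1)` is `Fin (n + 1)` by definition.
theorem isCycle_succ_iff {n : ℕ} {c : Fin (n + 1) → V} :
    IsCycle T (n + 1) c ↔ c.Injective ∧ (∀ i : Fin n, T (c i.castSucc) (c i.succ)) ∧
      T (c (Fin.last n)) (c 0) := by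
  refine and_congr_right fun _ => ?_
  refine (Fin.forall_fin_succ' (P := fun i => T (c i) (c (i + 1)))).trans ?_
  simp only [Fin.coeSucc_eq_succ, Fin.last_add_one]

theorem exists_isCycle_of_isChain {a : V} {l : List V} (hchain : (a :: l).IsChain T)
    (hnodup : (a :: l).Nodup) (hclose : T ((a :: l).getLast (l.cons_ne_nil a)) a) :
    ∃ c : ZMod (l.length + 1) → V,
      IsCycle T (l.length + 1) c ∧ range c = {v | v ∈ a :: l} := by
  refine ⟨(a :: l).get, isCycle_succ_iff.2 ⟨List.nodup_iff_injective_get.1 hnodup,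
    fun i => ?_, ?_⟩, range_list_get _⟩
  · exact List.isChain_iff_getElem.1 hchain i (by simp)
  · simpa [List.getLast_eq_getElem] using hclose

namespace IsCycle

theorem encard_range {m : ℕ} [NeZero m] {c : ZMod m → V} (hc : IsCycle T m c) :
    (range c).encard = m := by
  rw [← image_univ, hc.1.encard_image, encard_univ, ENat.card_eq_coe_natCard, Nat.card_zmod]

variable {n : ℕ} {c : ZMod (n + 2) → V}

theorem exists_isChain (hc : IsCycle T (n + 2) c) (i : ZMod (n + 2)) :
    ∃ l : List V, l.length = n ∧ (c i :: c (i + 1) :: l).IsChain T ∧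
      (c i :: c (i + 1) :: l).Nodup ∧
      (c (i + 1) :: l).getLast (l.cons_ne_nil _) = c (i - 1) ∧
      range c = {v | v ∈ c i :: c (i + 1) :: l} := by
  let p (j : ℕ) : V := c (i + j)
  have hlist : List.ofFn (fun j : Fin (n + 2) => p j) =
      c i :: c (i + 1) :: List.ofFn fun j : Fin n => p (j + 1 + 1) := by
    simp [p, List.ofFn_succ]
  have hinj : Function.Injective fun j : Fin (n + 2) => p j := fun j k hjk => by
    have hcast : ((j : ℕ) : ZMod (n + 2)) = (k : ℕ) := add_left_cancel (hc.1 hjk)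
    rw [Fin.ext_iff, ← ZMod.val_natCast_of_lt j.2, hcast, ZMod.val_natCast_of_lt k.2]
  have hrange : range (fun j : Fin (n + 2) => p j) = range c := by
    refine Subset.antisymm ?_ (range_subset_iff.2 fun k => ?_)
    · exact range_subset_iff.2 fun j => mem_range_self (i + (j : ℕ))
    · exact ⟨⟨(k - i).val, ZMod.val_lt _⟩, by simp [p]⟩
  have hlast : p (n + 1) = c (i - 1) := by
    have hself : ((n + 2 : ℕ) : ZMod (n + 2)) = 0 := ZMod.natCast_self _
    push_cast at hself
    refine congrArg c ?_
    push_cast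
    linear_combination hself
  refine ⟨List.ofFn fun j : Fin n => p (j + 1 + 1), List.length_ofFn, ?_, ?_, ?_, ?_⟩
  · rw [← hlist, List.isChain_ofFn]
    exact fun j _ => by simpa [p, add_assoc] using hc.2 (i + j)
  · rwa [← hlist, List.nodup_ofFn]
  · rw [← List.getLast_cons (a := c i) (List.cons_ne_nil _ _)]
    simp only [← hlist, List.getLast_ofFn_succ, Fin.val_last, hlast]
  · simp only [← hlist, List.mem_ofFn', hrange, ofPred_mem_eq]

theorem exists_isCycle_sdiff_of_shortcut (hc : IsCycle T (n + 2) c) {i : ZMod (n + 2)}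
    (h : T (c i) (c (i + 2))) :
    ∃ c' : ZMod (n + 1) → V, IsCycle T (n + 1) c' ∧ range c' = range c \ {c (i + 1)} := by
  obtain ⟨l, rfl, hchain, hnodup, hlast, hrange⟩ := hc.exists_isChain (i + 1)
  rw [add_sub_cancel_right] at hlast
  rw [show i + 2 = i + 1 + 1 by ring] at h
  obtain ⟨c', hc', hrange'⟩ :=
    exists_isCycle_of_isChain hchain.tail hnodup.tail (hlast ▸ h)
  refine ⟨c', hc', ?_⟩
  rw [hrange', hrange, setOf_mem_cons_sdiff_singleton hnodup]

theorem exists_isCycle_insert_of_consecutive (hc : IsCycle T (n + 2) c) {i : ZMod (n + 2)} {w : V}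
    (hw : w ∉ range c) (hin : T (c i) w) (hout : T w (c (i + 1))) :
    ∃ c' : ZMod (n + 3) → V, IsCycle T (n + 3) c' ∧ range c' = insert w (range c) := by
  obtain ⟨l, rfl, hchain, hnodup, hlast, hrange⟩ := hc.exists_isChain (i + 1)
  rw [hrange] at hw ⊢
  obtain ⟨c', hc', hrange'⟩ := exists_isCycle_of_isChain (hchain.cons_cons hout) (hnodup.cons hw)
    (by simpa [hlast] using hin)
  exact ⟨c', hc', by simp [hrange', insert_def]⟩

theorem exists_isCycle_insert (hc : IsCycle T (n + 2) c) (hT : IsTournament T) {u v w : V}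
    (hu : u ∈ range c) (hv : v ∈ range c) (hw : w ∉ range c) (huw : T u w) (hwv : T w v) :
    ∃ c' : ZMod (n + 3) → V, IsCycle T (n + 3) c' ∧ range c' = insert w (range c) := by
  obtain ⟨j, rfl⟩ := hu
  obtain ⟨k, rfl⟩ := hv
  obtain ⟨i, hi, hi'⟩ := exists_mem_add_one_notMem (A := {i | T (c i) w}) ⟨j, huw⟩
    ((ne_univ_iff_exists_notMem _).2 ⟨k, hT.asymm hwv⟩)
  have hne : w ≠ c (i + 1) := fun h => hw ⟨i + 1, h.symm⟩
  exact hc.exists_isCycle_insert_of_consecutive hw hi ((hT.2 _ _ hne).2 hi')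

theorem exists_isCycle_replace (hc : IsCycle T (n + 2) c) {i : ZMod (n + 2)} {a b : V}
    (ha : a ∉ range c) (hb : b ∉ range c) (hab : a ≠ b) (hin : T (c (i - 1)) a) (harc : T a b)
    (hout : T b (c (i + 1))) :
    ∃ c' : ZMod (n + 3) → V,
      IsCycle T (n + 3) c' ∧ range c' = insert a (insert b (range c \ {c i})) := by
  obtain ⟨l, rfl, hchain, hnodup, hlast, hrange⟩ := hc.exists_isChain i
  have hchain' : (a :: b :: c (i + 1) :: l).IsChain T :=
    (hchain.tail.cons_cons hout).cons_cons harc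
  have hnodup' : (a :: b :: c (i + 1) :: l).Nodup := by
    simp only [hrange, mem_ofPred_eq, List.mem_cons, List.nodup_cons] at *
    tauto
  have hclose : T ((a :: b :: c (i + 1) :: l).getLast (List.cons_ne_nil _ _)) a := by
    rwa [List.getLast_cons (List.cons_ne_nil _ _), List.getLast_cons (List.cons_ne_nil _ _), hlast]
  obtain ⟨c', hc', hrange'⟩ := exists_isCycle_of_isChain hchain' hnodup' hclose
  refine ⟨c', hc', ?_⟩
  rw [hrange', hrange, setOf_mem_cons_sdiff_singleton hnodup]
  simp [insert_def]

end IsCycle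

/-- The digraph induced by `T` on `S` is strongly connected, expressed by cuts instead of directed
paths: an arc leaves every nonempty proper subset of `S`. -/
def IsStronglyConnectedOn (T : V → V → Prop) (S : Set V) : Prop :=
  ∀ A ⊂ S, A.Nonempty → ∃ x ∈ A, ∃ y ∈ S \ A, T x y

theorem IsCycle.isStronglyConnectedOn_range {m : ℕ} [NeZero m] {c : ZMod m → V}
    (hc : IsCycle T m c) : IsStronglyConnectedOn T (range c) := by
  intro A hA hne
  obtain ⟨i, hi, hi'⟩ := exists_mem_add_one_notMem (A := c ⁻¹' A)
    (hne.preimage' hA.subset) fun h => hA.not_subset (by rwa [← preimage_eq_univ_iff])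
  exact ⟨c i, hi, c (i + 1), ⟨⟨_, rfl⟩, hi'⟩, hc.2 i⟩

namespace IsStronglyConnectedOn

variable {S : Set V}

theorem exists_isCycle_three (hS : IsStronglyConnectedOn T S) (hT : IsTournament T)
    (hnontriv : S.Nontrivial) :
    ∃ c : ZMod 3 → V, IsCycle T 3 c ∧ range c ⊆ S := by
  obtain ⟨v, hv, u, hu, hvu⟩ := hnontriv
  have hsingleton : {v} ⊂ S := (singleton_subset_iff.2 hv).ssubset_of_mem_notMem hu hvu.symm
  obtain ⟨w, ⟨hw, -⟩, hvw⟩ : ∃ w ∈ S \ {v}, T v w := by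
    simpa using hS {v} hsingleton (singleton_nonempty v)
  have hout : {w ∈ S | T v w} ⊂ S :=
    (sep_subset S _).ssubset_of_mem_notMem hv fun h => hT.1 v h.2
  obtain ⟨x, ⟨hx, hvx⟩, y, ⟨hy, hvy⟩, hxy⟩ := hS _ hout ⟨w, hw, hvw⟩
  have hne : y ≠ v := fun h => hT.asymm hvx (h ▸ hxy)
  have hyv : T y v := (hT.2 y v hne).2 fun h => hvy ⟨hy, h⟩
  have hnodup : [v, x, y].Nodup := by
    simp [hne.symm, hT.ne_of_arc hvx, hT.ne_of_arc hxy]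
  obtain ⟨c, hc, hrange⟩ := exists_isCycle_of_isChain (by simp [hvx, hxy]) hnodup hyv
  exact ⟨c, hc, by simp [hrange, subset_def, hv, hx, hy]⟩

theorem exists_isCycle_succ_of_ssubset (hS : IsStronglyConnectedOn T S) (hT : IsTournament T)
    {n : ℕ} {c : ZMod (n + 2) → V} (hc : IsCycle T (n + 2) c) (hsub : range c ⊂ S) :
    ∃ c' : ZMod (n + 3) → V, IsCycle T (n + 3) c' ∧ range c' ⊆ S := by
  by_contra! hno
  have hdom {u w : V} (hw : w ∈ S \ range c) (hu : u ∈ range c) (huw : T u w) :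
      ∀ v ∈ range c, T v w := by
    intro v hv
    by_contra hvw
    have hne : w ≠ v := fun h => hw.2 (h ▸ hv)
    obtain ⟨c', hc', hrange⟩ := hc.exists_isCycle_insert hT hu hv hw.2 huw
      ((hT.2 w v hne).2 hvw)
    exact hno c' hc' (hrange ▸ insert_subset hw.1 hsub.subset)
  let B : Set V := {w ∈ S \ range c | ∀ v ∈ range c, T v w}
  have hB : B.Nonempty := by
    obtain ⟨u, hu, w, hw, huw⟩ := hS (range c) hsub (range_nonempty c)
    exact ⟨w, hw, hdom hw hu huw⟩
  have hBS : B ⊂ S :=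
    ((sep_subset _ _).trans sdiff_subset).ssubset_of_mem_notMem (hsub.subset ⟨0, rfl⟩)
      fun h => h.1.2 ⟨0, rfl⟩
  obtain ⟨b, ⟨hb, hcb⟩, a, ⟨haS, haB⟩, hba⟩ := hS B hBS hB
  have ha : a ∉ range c := fun h => hT.asymm hba (hcb a h)
  have hac : ∀ v ∈ range c, T a v := fun v hv =>
    (hT.2 a v fun h => ha (h ▸ hv)).2 fun hva => haB ⟨⟨haS, ha⟩, hdom ⟨haS, ha⟩ hv hva⟩
  obtain ⟨c', hc', hrange⟩ := hc.exists_isCycle_replace (i := 0) hb.2 ha (hT.ne_of_arc hba)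
    (hcb _ ⟨_, rfl⟩) hba (hac _ ⟨_, rfl⟩)
  refine hno c' hc' (hrange ▸ insert_subset hb.1 (insert_subset haS ?_))
  exact sdiff_subset.trans hsub.subset

theorem exists_isCycle (hS : IsStronglyConnectedOn T S) (hT : IsTournament T) {k : ℕ}
    (hk : 3 ≤ k) (hkS : k ≤ S.encard) : ∃ c : ZMod k → V, IsCycle T k c ∧ range c ⊆ S := by
  induction k, hk using Nat.le_induction with
  | base =>
    have h13 : (1 : ℕ∞) < (3 : ℕ) := by norm_num
    exact hS.exists_isCycle_three hT (one_lt_encard_iff_nontrivial.1 (h13.trans_le hkS))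
  | succ k hk ih =>
    have hlt : (k : ℕ∞) < (k + 1 : ℕ) := by exact_mod_cast k.lt_succ_self
    obtain ⟨c, hc, hsub⟩ := ih (hlt.le.trans hkS)
    obtain ⟨n, rfl⟩ : ∃ n, k = n + 2 := ⟨k - 2, by omega⟩
    have hne : range c ≠ S := by
      rintro rfl
      exact (hlt.trans_le hkS).ne' hc.encard_range
    exact hS.exists_isCycle_succ_of_ssubset hT hc (hsub.ssubset_of_ne hne)

end IsStronglyConnectedOn

theorem two_le_inDegFrom {S : Set V} {u v w : V} (hS : S.Finite) (hu : u ∈ S) (hv : v ∈ S)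
    (huv : u ≠ v) (huw : T u w) (hvw : T v w) : 2 ≤ inDegFrom T S w :=
  (one_lt_ncard (hS.sep _)).2 ⟨u, ⟨hu, huw⟩, v, ⟨hv, hvw⟩, huv⟩

namespace IsCycle

variable {m : ℕ} {c : ZMod m → V}

theorem arc_of_inDegFrom_lt_two [NeZero m] (hc : IsCycle T m c) (hT : IsTournament T)
    {i j : ZMod m} (hin : inDegFrom T (range c) (c (i + 1)) < 2) (hj : j ≠ i)
    (hj' : j ≠ i + 1) : T (c (i + 1)) (c j) := by
  refine (hT.2 _ _ (hc.1.ne hj'.symm)).2 fun harc => hin.not_ge ?_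
  exact two_le_inDegFrom (finite_range c) ⟨j, rfl⟩ ⟨i, rfl⟩ (hc.1.ne hj) harc (hc.2 i)

theorem exists_shortcut_of_inDegFrom_lt_two (hc : IsCycle T m c) (hT : IsTournament T)
    (hm : 4 ≤ m) {v : V} (hv : v ∈ range c) (hin : inDegFrom T (range c) v < 2) :
    ∃ i, T (c i) (c (i + 2)) ∧ 2 ≤ inDegFrom T (range c) (c (i + 1)) := by
  have : NeZero m := ⟨by omega⟩
  have hne_zero (t : ℕ) (ht : 0 < t) (htm : t < m) : (t : ZMod m) ≠ 0 := fun h =>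
    Nat.not_dvd_of_pos_of_lt ht htm ((ZMod.natCast_eq_zero_iff t m).1 h)
  have hone : (1 : ZMod m) ≠ 0 := by exact_mod_cast hne_zero 1 (by omega) (by omega)
  have htwo : (2 : ZMod m) ≠ 0 := by exact_mod_cast hne_zero 2 (by omega) (by omega)
  have hthree : (3 : ZMod m) ≠ 0 := by exact_mod_cast hne_zero 3 (by omega) (by omega)
  have hskip {i : ZMod m} (hi : inDegFrom T (range c) (c i) < 2) : T (c i) (c (i + 2)) := by
    obtain ⟨j, rfl⟩ : ∃ j, i = j + 1 := ⟨i - 1, by ring⟩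
    refine hc.arc_of_inDegFrom_lt_two hT hi (fun h => hthree ?_) fun h => htwo ?_
    · linear_combination h
    · linear_combination h
  obtain ⟨i, rfl⟩ := hv
  by_cases hnext : 2 ≤ inDegFrom T (range c) (c (i + 1))
  · exact ⟨i, hskip hin, hnext⟩
  · refine ⟨i + 1, hskip (not_le.1 hnext), ?_⟩
    have harc : T (c (i + 1)) (c (i + 1 + 1)) := hc.2 (i + 1)
    have harc' : T (c i) (c (i + 1 + 1)) := by
      simpa only [add_assoc, one_add_one_eq_two] using hskip hin
    exact two_le_inDegFrom (finite_range c) ⟨i, rfl⟩ ⟨i + 1, rfl⟩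
      (hc.1.ne (by simpa using hone)) harc' harc

end IsCycle

end

theorem stmt8 {V : Type*} (T : V → V → Prop) (hT : IsTournament T)
    (m : ℕ) (hm : 4 ≤ m) (c : ZMod m → V) (hc : IsCycle T m c) :
    ∃ c' : ZMod (m - 1) → V, IsCycle T (m - 1) c' ∧
      Set.range c' ⊆ Set.range c ∧
      ∀ u ∈ Set.range c \ Set.range c', outDegTo T u (Set.range c) ≤ m - 3 := by
  have : NeZero m := ⟨by omega⟩
  have hcard : (range c).ncard = m := by rw [ncard, hc.encard_range, ENat.toNat_natCast]
  have hdeg {u : V} (hu : u ∈ range c) (hin : 2 ≤ inDegFrom T (range c) u) :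
      outDegTo T u (range c) ≤ m - 3 := by
    simpa only [hcard] using hT.outDegTo_le_ncard_sub_three (finite_range c) hu hin
  by_cases hall : ∀ u ∈ range c, 2 ≤ inDegFrom T (range c) u
  · have hle : ((m - 1 : ℕ) : ℕ∞) ≤ (range c).encard := by
      rw [hc.encard_range]
      exact_mod_cast m.sub_le 1
    obtain ⟨c', hc', hsub⟩ := hc.isStronglyConnectedOn_range.exists_isCycle hT (by omega) hle
    exact ⟨c', hc', hsub, fun u hu => hdeg hu.1 (hall u hu.1)⟩
  · push Not at hall
    obtain ⟨v, hv, hin⟩ := hall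
    obtain ⟨i, hskip, hin'⟩ := hc.exists_shortcut_of_inDegFrom_lt_two hT hm hv hin
    obtain ⟨n, rfl⟩ : ∃ n, m = n + 2 := ⟨m - 2, by omega⟩
    obtain ⟨c', hc', hrange⟩ := hc.exists_isCycle_sdiff_of_shortcut hskip
    refine ⟨c', hc', hrange ▸ sdiff_subset, fun u hu => ?_⟩
    obtain rfl : u = c (i + 1) := by simpa [hrange, hu.1] using hu.2
    exact hdeg hu.1 hin'
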